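/- arXiv:1610.02566 — 3 statements merged into one kernel-verified Lean document; each statement's English description precedes it below -/
import Mathlib

section
/- Under the energy-harvesting block-transmission model with the additional assumption that all rows of U_s have equal squared norm ‖u_i‖² = s/N for every i (as holds for circularly wide-sense stationary signals, where U_s consists of columns of the DFT matrix), the expected estimation error satisfies E[ε] ≥ P_x / (1 + (μ_E/σ_w²)·(N/s)). -/
open Matrix Finset MeasureTheory ProbabilityTheory

/-- Squared Euclidean norm of `u_i`, the conjugate transpose of the `i`-th row of `Us`. -/
noncomputable def rowNormSq {N s : ℕ} (Us : Matrix (Fin N) (Fin s) ℂ) (i : Fin N) : ℝ :=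
  ∑ j, ‖Us i j‖ ^ 2

/-- The (0-based) global index `(k−1)·Q + t` of sample `t` of block `k`. -/
def blockIdx (nT Q : ℕ) (k : Fin nT) (t : Fin Q) : Fin (nT * Q) := finProdFinEquiv (k, t)

/-- The block containing global index `i`. -/
def blockOf (nT Q : ℕ) (i : Fin (nT * Q)) : Fin nT := (finProdFinEquiv.symm i).1

/-!
For every positive definite `A` and real `c`, positivity of `(1 - c A)ᴴ A⁻¹ (1 - c A)` gives the
tangent-line bound `2 c n - c² tr A ≤ tr A⁻¹`. It is affine in `A`, so it survives taking
expectations, and the choice `c = n / 𝔼[tr A]` yields Jensen's inequality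
`n² / 𝔼[tr A] ≤ 𝔼[tr A⁻¹]`.

For the energy-harvesting matrix the normalisation of the block powers by `S_k` makes
`tr (Uᴴ G U)` equal to `(n / P_x) ∑ E_i` whatever the row norms of `U` are, so that its expectation
only involves the means of the `E_i`.
-/

open scoped ComplexOrder

section Trace

variable {𝕜 m n : Type*} [RCLike 𝕜]

open scoped MatrixOrder in
lemma trace_mul_nonneg_of_posSemidef [Fintype n] {A B : Matrix n n 𝕜} (hA : A.PosSemidef)
    (hB : B.PosSemidef) : 0 ≤ (A * B).trace := by
  classical
  obtain ⟨C, rfl⟩ := CStarAlgebra.nonneg_iff_eq_star_mul_self.mp hB.nonneg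
  rw [← Matrix.mul_assoc, trace_mul_comm, ← Matrix.mul_assoc]
  exact (hA.mul_mul_conjTranspose_same C).trace_nonneg

lemma trace_conjTranspose_mul_diagonal_mul [Fintype m] [DecidableEq m] [Fintype n]
    (U : Matrix m n 𝕜) (g : m → 𝕜) :
    (Uᴴ * diagonal g * U).trace = ∑ i, g i * ∑ j, (‖U i j‖ : 𝕜) ^ 2 := by
  rw [Matrix.mul_assoc, trace_mul_comm, Matrix.mul_assoc, trace]
  refine Finset.sum_congr rfl fun i _ => ?_
  rw [diag_apply, diagonal_mul, mul_apply]
  simp only [conjTranspose_apply, RCLike.star_def, RCLike.mul_conj]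

variable [DecidableEq n]

lemma posDef_smul_one_add {a : ℝ} (ha : 0 < a) {B : Matrix n n 𝕜} (hB : B.PosSemidef) :
    (a • (1 : Matrix n n 𝕜) + B).PosDef :=
  (PosDef.one.smul ha).add_posSemidef hB

variable [Fintype n]

lemma one_sub_smul_conj_inv {A : Matrix n n 𝕜} (hA : A.PosDef) (c : ℝ) :
    (1 - c • A)ᴴ * A⁻¹ * (1 - c • A) = A⁻¹ - (2 * c) • (1 : Matrix n n 𝕜) + c ^ 2 • A := by
  have hdet : IsUnit A.det := (isUnit_iff_isUnit_det A).1 hA.isUnit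
  have hself : (1 - c • A)ᴴ = 1 - c • A := by simp [conjTranspose_smul, hA.isHermitian.eq]
  simp only [hself, sub_mul, mul_sub, one_mul, mul_one, smul_mul_assoc, mul_smul_comm,
    mul_nonsing_inv A hdet, nonsing_inv_mul A hdet]
  module

lemma two_mul_card_sub_sq_mul_re_trace_le_re_trace_inv {A : Matrix n n 𝕜} (hA : A.PosDef)
    (c : ℝ) :
    2 * c * Fintype.card n - c ^ 2 * RCLike.re A.trace ≤ RCLike.re A⁻¹.trace := by
  have hnonneg := (hA.inv.posSemidef.conjTranspose_mul_mul_same (1 - c • A)).trace_nonneg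
  have hre := (RCLike.nonneg_iff.1 hnonneg).1
  simp only [one_sub_smul_conj_inv hA, trace_add, trace_sub, trace_smul, trace_one, map_add,
    map_sub, RCLike.smul_re, RCLike.natCast_re] at hre
  linarith

lemma re_trace_inv_smul_one_add_le {a : ℝ} (ha : 0 < a) {B : Matrix n n 𝕜}
    (hB : B.PosSemidef) :
    RCLike.re (a • (1 : Matrix n n 𝕜) + B)⁻¹.trace ≤ Fintype.card n / a := by
  have hA := posDef_smul_one_add ha hB
  set A := a • (1 : Matrix n n 𝕜) + B with hA_def
  have hinv : A⁻¹ * B = 1 - a • A⁻¹ := by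
    rw [eq_sub_iff_add_eq', ← nonsing_inv_mul A ((isUnit_iff_isUnit_det A).1 hA.isUnit)]
    conv_rhs => rw [hA_def]
    rw [mul_add, mul_smul_comm, mul_one]
  have hre := (RCLike.nonneg_iff.1 (trace_mul_nonneg_of_posSemidef hA.inv.posSemidef hB)).1
  simp only [hinv, trace_sub, trace_smul, trace_one, map_sub, RCLike.smul_re,
    RCLike.natCast_re] at hre
  rw [le_div_iff₀ ha]
  linarith

end Trace

section RandomMatrix

variable {Ω 𝕜 m n : Type*} [MeasurableSpace Ω] {P : Measure Ω} [RCLike 𝕜]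

lemma aestronglyMeasurable_conjTranspose_mul_diagonal_mul [Fintype m] [DecidableEq m]
    (U : Matrix m n 𝕜) {g : m → Ω → ℝ} (hg : ∀ i, AEMeasurable (g i) P) :
    AEStronglyMeasurable (fun ω => Uᴴ * diagonal (fun i => (g i ω : 𝕜)) * U) P := by
  have hcont : Continuous fun x : m → ℝ => Uᴴ * diagonal (fun i => (x i : 𝕜)) * U := by
    fun_prop
  exact hcont.comp_aestronglyMeasurable
    (aemeasurable_pi_lambda (fun ω i => g i ω) hg).aestronglyMeasurable

variable [Fintype n] [DecidableEq n]

lemma aestronglyMeasurable_matrix_inv {A : Ω → Matrix n n 𝕜} (hA : AEStronglyMeasurable A P) :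
    AEStronglyMeasurable (fun ω => (A ω)⁻¹) P := by
  simp only [Matrix.inv_def, Ring.inverse_eq_inv']
  exact (continuous_id.matrix_det.comp_aestronglyMeasurable hA).inv₀.smul
    (continuous_id.matrix_adjugate.comp_aestronglyMeasurable hA)

theorem integrable_re_trace_inv_smul_one_add [IsFiniteMeasure P] {a : ℝ} (ha : 0 < a)
    {B : Ω → Matrix n n 𝕜} (hB : ∀ᵐ ω ∂P, (B ω).PosSemidef) (hB_meas : AEStronglyMeasurable B P) :
    Integrable (fun ω => RCLike.re (a • (1 : Matrix n n 𝕜) + B ω)⁻¹.trace) P := by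
  have hinv_meas := aestronglyMeasurable_matrix_inv
    ((aestronglyMeasurable_const (b := a • (1 : Matrix n n 𝕜))).add hB_meas)
  have htrace_meas : AEStronglyMeasurable
      (fun ω => RCLike.re (a • (1 : Matrix n n 𝕜) + B ω)⁻¹.trace) P :=
    (RCLike.continuous_re.comp continuous_id.matrix_trace).comp_aestronglyMeasurable hinv_meas
  refine Integrable.of_mem_Icc 0 (Fintype.card n / a) htrace_meas.aemeasurable ?_
  filter_upwards [hB] with ω hω
  have hinv := (posDef_smul_one_add ha hω).inv.posSemidef
  exact ⟨(RCLike.nonneg_iff.1 hinv.trace_nonneg).1, re_trace_inv_smul_one_add_le ha hω⟩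

theorem sq_card_div_integral_re_trace_le_integral_re_trace_inv [IsProbabilityMeasure P]
    {A : Ω → Matrix n n 𝕜} (hA : ∀ᵐ ω ∂P, (A ω).PosDef)
    (hint : Integrable (fun ω => RCLike.re (A ω).trace) P)
    (hint_inv : Integrable (fun ω => RCLike.re (A ω)⁻¹.trace) P) :
    (Fintype.card n : ℝ) ^ 2 / ∫ ω, RCLike.re (A ω).trace ∂P ≤
      ∫ ω, RCLike.re (A ω)⁻¹.trace ∂P := by
  set M := ∫ ω, RCLike.re (A ω).trace ∂P with hM
  set c := (Fintype.card n : ℝ) / M with hc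
  have hvalue : (Fintype.card n : ℝ) ^ 2 / M = 2 * c * Fintype.card n - c ^ 2 * M := by
    rcases eq_or_ne M 0 with hM0 | hM0
    · simp [hc, hM0]
    · rw [hc]; field_simp; ring
  calc (Fintype.card n : ℝ) ^ 2 / M
      = ∫ ω, (2 * c * Fintype.card n - c ^ 2 * RCLike.re (A ω).trace) ∂P := by
        rw [hvalue, integral_sub (integrable_const _) (hint.const_mul _),
          integral_const_mul (c ^ 2)]
        simp [hM]
    _ ≤ ∫ ω, RCLike.re (A ω)⁻¹.trace ∂P := by
        refine integral_mono_ae ((integrable_const _).sub (hint.const_mul _)) hint_inv ?_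
        filter_upwards [hA] with ω hω
        exact two_mul_card_sub_sq_mul_re_trace_le_re_trace_inv hω c

theorem sq_card_div_le_integral_re_trace_inv_smul_one_add [IsProbabilityMeasure P] {a : ℝ}
    (ha : 0 < a) {B : Ω → Matrix n n 𝕜} (hB : ∀ᵐ ω ∂P, (B ω).PosSemidef)
    (hB_meas : AEStronglyMeasurable B P) (hint : Integrable (fun ω => RCLike.re (B ω).trace) P) :
    (Fintype.card n : ℝ) ^ 2 / (a * Fintype.card n + ∫ ω, RCLike.re (B ω).trace ∂P) ≤
      ∫ ω, RCLike.re (a • (1 : Matrix n n 𝕜) + B ω)⁻¹.trace ∂P := by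
  have htrace : ∀ ω, RCLike.re (a • (1 : Matrix n n 𝕜) + B ω).trace =
      a * Fintype.card n + RCLike.re (B ω).trace := fun ω => by
    simp only [trace_add, trace_smul, trace_one, map_add, RCLike.smul_re, RCLike.natCast_re]
  have hmean : ∫ ω, RCLike.re (a • (1 : Matrix n n 𝕜) + B ω).trace ∂P =
      a * Fintype.card n + ∫ ω, RCLike.re (B ω).trace ∂P := by
    simp only [htrace, integral_add (integrable_const _) hint, integral_const, probReal_univ,
      one_smul]
  rw [← hmean]
  refine sq_card_div_integral_re_trace_le_integral_re_trace_inv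
    (hB.mono fun ω => posDef_smul_one_add ha) ?_
    (integrable_re_trace_inv_smul_one_add ha hB hB_meas)
  simp only [htrace]
  exact (integrable_const _).add hint

end RandomMatrix

section Blocks

lemma sum_fiber_div_sum_fiber_mul {F ι κ : Type*} [Field F] [Fintype ι]
    [DecidableEq κ] (b : ι → κ) {w : ι → F} (hw : ∀ i, ∑ j with b j = b i, w j ≠ 0) (e : ι → F) :
    ∑ i, (∑ j with b j = b i, e j) / (∑ j with b j = b i, w j) * w i = ∑ i, e i := by
  have hmaps : ∀ i ∈ univ, b i ∈ univ.image b := fun i _ =>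
    Finset.mem_image_of_mem b (Finset.mem_univ i)
  rw [← Finset.sum_fiberwise_of_maps_to hmaps, ← Finset.sum_fiberwise_of_maps_to hmaps e]
  refine Finset.sum_congr rfl fun k hk => ?_
  obtain ⟨i₀, -, rfl⟩ := Finset.mem_image.1 hk
  calc ∑ i with b i = b i₀, (∑ j with b j = b i, e j) / (∑ j with b j = b i, w j) * w i
      = ∑ i with b i = b i₀, (∑ j with b j = b i₀, e j) / (∑ j with b j = b i₀, w j) * w i :=
        Finset.sum_congr rfl fun i hi => by rw [(Finset.mem_filter.1 hi).2]
    _ = ∑ j with b j = b i₀, e j := by rw [← Finset.mul_sum, div_mul_cancel₀ _ (hw i₀)]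

lemma sum_filter_blockOf_eq {M : Type*} [AddCommMonoid M] (nT Q : ℕ) (k : Fin nT)
    (f : Fin (nT * Q) → M) :
    ∑ i with blockOf nT Q i = k, f i = ∑ t, f (blockIdx nT Q k t) := by
  rw [Finset.sum_filter, ← finProdFinEquiv.sum_comp, Fintype.sum_prod_type_right]
  simp [blockOf, blockIdx]

end Blocks

theorem stmt_7_general {Ω 𝕜 ι κ n : Type*} [MeasurableSpace Ω] {P : Measure Ω}
    [IsProbabilityMeasure P] [RCLike 𝕜] [Fintype ι] [DecidableEq ι] [DecidableEq κ]
    [Fintype n] [DecidableEq n] [Nonempty n] (U : Matrix ι n 𝕜) (b : ι → κ)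
    {Px σw2 : ℝ} (hPx : 0 < Px) (hσ : 0 < σw2) {E : ι → Ω → ℝ}
    (hE_int : ∀ i, Integrable (E i) P) (hE_nonneg : ∀ i, ∀ᵐ ω ∂P, 0 ≤ E i ω) {S : κ → ℝ}
    (hS : ∀ k, S k = ∑ i with b i = k, Px / Fintype.card n * ∑ j, ‖U i j‖ ^ 2)
    (hS_pos : ∀ i, 0 < S (b i)) {p : κ → Ω → ℝ}
    (hp : ∀ k ω, p k ω = (∑ i with b i = k, E i ω) / S k) :
    Px / (1 + (∑ i, ∫ ω, E i ω ∂P) / σw2 / Fintype.card n) ≤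
      ∫ ω, RCLike.re (((Fintype.card n / Px : ℝ) • (1 : Matrix n n 𝕜) +
        σw2⁻¹ • (Uᴴ * diagonal (fun i => (p (b i) ω : 𝕜)) * U))⁻¹).trace ∂P := by
  have hcard : (0 : ℝ) < Fintype.card n := by exact_mod_cast Fintype.card_pos
  have hpsd : ∀ᵐ ω ∂P,
      (σw2⁻¹ • (Uᴴ * diagonal (fun i => (p (b i) ω : 𝕜)) * U)).PosSemidef := by
    filter_upwards [ae_all_iff.2 hE_nonneg] with ω hω
    refine ((posSemidef_diagonal_iff.2 fun i => ?_).conjTranspose_mul_mul_same U).smul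
      (inv_pos.2 hσ).le
    rw [hp]
    exact RCLike.ofReal_nonneg.2 (div_nonneg (Finset.sum_nonneg fun j _ => hω j) (hS_pos _).le)
  have hmeas : AEStronglyMeasurable
      (fun ω => σw2⁻¹ • (Uᴴ * diagonal (fun i => (p (b i) ω : 𝕜)) * U)) P := by
    have hp_meas : ∀ i, AEMeasurable (p (b i)) P := fun i => by
      rw [funext (hp (b i))]
      exact ((integrable_finsetSum _ fun j _ => hE_int j).div_const _).aemeasurable
    exact (aestronglyMeasurable_conjTranspose_mul_diagonal_mul U hp_meas).const_smul σw2⁻¹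
  have htrace : ∀ ω, RCLike.re (σw2⁻¹ • (Uᴴ * diagonal (fun i => (p (b i) ω : 𝕜)) * U)).trace =
      σw2⁻¹ * (Fintype.card n / Px * ∑ i, E i ω) := fun ω => by
    have hblock := sum_fiber_div_sum_fiber_mul b (fun i => hS (b i) ▸ (hS_pos i).ne') (E · ω)
    simp only [← hS, ← hp] at hblock
    rw [trace_smul, trace_conjTranspose_mul_diagonal_mul, RCLike.smul_re, ← hblock,
      Finset.mul_sum]
    norm_cast
    congr 1
    refine Finset.sum_congr rfl fun i _ => ?_
    field_simp
  have hmean := sq_card_div_le_integral_re_trace_inv_smul_one_add (div_pos hcard hPx) hpsd hmeas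
  simp only [htrace, integral_const_mul, integral_finsetSum _ fun i _ => hE_int i] at hmean
  refine le_of_eq_of_le ?_
    (hmean (((integrable_finsetSum _ fun i _ => hE_int i).const_mul _).const_mul _))
  field_simp

/-- In the energy-harvesting block-transmission model with all rows of `Us` of equal squared
norm `‖u_i‖² = s/N` (c.w.s.s. signals), the expected estimation error satisfies
`E[ε] ≥ P_x/(1 + (μ_E/σ_w²)·(N/s))`. -/
theorem stmt_7
    {Ω : Type} [MeasureSpace Ω] [IsProbabilityMeasure (ℙ : Measure Ω)]
    (s nT Q : ℕ) (hs : 0 < s) (hnT : 0 < nT) (hQ : 0 < Q) (hsN : s ≤ nT * Q)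
    (Us : Matrix (Fin (nT * Q)) (Fin s) ℂ) (hUs : Usᴴ * Us = 1)
    (hrow : ∀ i, rowNormSq Us i = (s : ℝ) / (nT * Q))
    (Px σw2 : ℝ) (hPx : 0 < Px) (hσ : 0 < σw2)
    (μE ϱE rE : ℝ) (hμE : 0 < μE) (hϱE : 0 < ϱE) (hrE : 1 ≤ rE)
    (E : Fin (nT * Q) → Ω → ℝ) (hEmeas : ∀ i, Measurable (E i))
    (hindep : iIndepFun E ℙ)
    (hident : ∀ i j, IdentDistrib (E i) (E j) ℙ ℙ)
    (hmean : ∀ i, ∫ ω, E i ω = μE)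
    (hvar : ∀ i, variance (E i) ℙ = ϱE)
    (hbdd : ∀ i, ∀ᵐ ω, 0 ≤ E i ω ∧ E i ω ≤ rE * μE)
    (S : Fin nT → ℝ)
    (hS : ∀ k, S k = ∑ t : Fin Q, Px / s * rowNormSq Us (blockIdx nT Q k t))
    (p : Fin nT → Ω → ℝ)
    (hp : ∀ k ω, p k ω = (∑ t : Fin Q, E (blockIdx nT Q k t) ω) / S k)
    (G : Ω → Matrix (Fin (nT * Q)) (Fin (nT * Q)) ℂ)
    (hG : ∀ ω, G ω = Matrix.diagonal fun i => ((p (blockOf nT Q i) ω : ℝ) : ℂ))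
    (ε : Ω → ℝ)
    (hε : ∀ ω, ε ω =
      ((((s / Px : ℝ) : ℂ) • (1 : Matrix (Fin s) (Fin s) ℂ) +
        ((σw2 : ℝ) : ℂ)⁻¹ • (Usᴴ * G ω * Us))⁻¹).trace.re) :
    Px / (1 + μE / σw2 * ((nT * Q : ℕ) : ℝ) / s) ≤ ∫ ω, ε ω := by
  have : Nonempty (Fin s) := ⟨⟨0, hs⟩⟩
  have hS_pos : ∀ k, 0 < S k := fun k => by
    simp only [hS, hrow, Finset.sum_const, Finset.card_univ, Fintype.card_fin, nsmul_eq_mul]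
    positivity
  have hmean_sum : ∑ i, ∫ ω, E i ω = μE * (nT * Q : ℕ) := by simp [hmean, mul_comm]
  have hbound := stmt_7_general Us (blockOf nT Q) hPx hσ
    (fun i => .of_mem_Icc 0 (rE * μE) (hEmeas i).aemeasurable (hbdd i))
    (fun i => (hbdd i).mono fun ω => And.left) (S := S)
    (by simpa only [Fintype.card_fin, sum_filter_blockOf_eq, rowNormSq] using hS)
    (fun i => hS_pos _) (by simpa only [sum_filter_blockOf_eq] using hp)
  rw [hmean_sum, mul_div_right_comm] at hbound
  simp only [hε, hG, ← Complex.ofReal_inv, Complex.coe_smul]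
  simpa using hbound
end

section
/- Let s and N be positive integers with s dividing N, set Q = N/s, let U_s ∈ ℂ^{N×s} consist of the first s columns of the N×N DFT matrix F^N, and fix t_d ∈ {0,…,Q−1}. Let c_1,…,c_s be real numbers and let D be the N×N diagonal matrix whose (Q(k−1)+t_d+1)-th diagonal entry equals c_k for k = 1,…,s, with all other diagonal entries zero. Then U_s† D U_s is unitarily similar to (s/N)·diag(c_1,…,c_s); in particular, the multiset of eigenvalues of U_s† D U_s equals {(s/N)·c_k : k = 1,…,s}. -/
open Matrix Finset

/-- The `n×n` DFT matrix, `[F^n]_{tk} = (1/√n)·exp(−j·(2π/n)·(t−1)(k−1))` (0-based indices). -/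
noncomputable def dftMatrix (n : ℕ) : Matrix (Fin n) (Fin n) ℂ :=
  Matrix.of fun t k =>
    (1 / (Real.sqrt n : ℂ)) *
      Complex.exp (-Complex.I * ((2 * Real.pi / n : ℝ) : ℂ) * (t.1 : ℂ) * (k.1 : ℂ))

/-- The (0-based) index `Q·k + t_d` inside `Fin (s·Q)` (the `(Q(k−1)+t_d+1)`-th position,
1-based). -/
def posIdx (s Q : ℕ) (td : Fin Q) (k : Fin s) : Fin (s * Q) := finProdFinEquiv (k, td)

/-!
Only the rows `Q * k + t_d` of `U_s` meet the support of `D`. Writing `ω_n = exp (-2πi / n)` and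
`N = s * Q`, the entries of these rows are
`ω_N ^ ((Q * k + t_d) * j) / √N = (1 / √Q) * (ω_s ^ (k * j) / √s) * ω_N ^ (t_d * j)`,
so they form `1 / √Q` times the product `W` of the `s × s` DFT matrix and a diagonal matrix of
phases. As `W` is unitary, `U_s† D U_s = (1 / Q) • W† diag(c) W`.
-/

section LinearAlgebra

theorem mul_sum_smul_single_mul {l m n ι R : Type*} [Fintype m] [DecidableEq m] [Fintype ι]
    [DecidableEq ι] [Semiring R] (A : Matrix l m R) (B : Matrix m n R) (f : ι → m) (c : ι → R) :
    A * (∑ k, c k • Matrix.single (f k) (f k) (1 : R)) * B =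
      A.submatrix id f * diagonal c * B.submatrix f id := by
  ext a b
  simp only [Matrix.mul_sum, Matrix.sum_mul, Matrix.sum_apply, Matrix.mul_apply (M := _ * _),
    Matrix.mul_diagonal, smul_single, smul_eq_mul, mul_one, submatrix_apply, id_eq]
  refine Finset.sum_congr rfl fun k _ => ?_
  rw [Finset.sum_eq_single_of_mem (f k) (mem_univ _), Matrix.mul_single_apply_same]
  intro i _ hi
  rw [Matrix.mul_single_apply_of_ne _ _ _ _ _ hi, zero_mul]

variable {n : Type*} [Fintype n] [DecidableEq n]

theorem charpoly_unitary_conj {R : Type*} [CommRing R] [StarRing R] (V : unitaryGroup n R)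
    (A : Matrix n n R) : ((V : Matrix n n R) * A * (V : Matrix n n R)ᴴ).charpoly = A.charpoly := by
  rw [Matrix.mul_assoc, charpoly_mul_comm, Matrix.mul_assoc, ← star_eq_conjTranspose,
    Unitary.coe_star_mul_self, Matrix.mul_one]

theorem diagonal_mem_unitaryGroup {𝕜 : Type*} [RCLike 𝕜] {w : n → 𝕜} (hw : ∀ i, ‖w i‖ = 1) :
    diagonal w ∈ unitaryGroup n 𝕜 := by
  rw [mem_unitaryGroup_iff, star_eq_conjTranspose, diagonal_conjTranspose, diagonal_mul_diagonal,
    ← diagonal_one]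
  congr 1 with i
  simp [RCLike.mul_conj, hw i]

end LinearAlgebra

section RootsOfUnity

variable {K : Type*} [Field K]

theorem sum_pow_eq_ite_of_pow_eq_one [DecidableEq K] {n : ℕ} {z : K} (hz : z ^ n = 1) :
    ∑ t : Fin n, z ^ (t : ℕ) = if z = 1 then (n : K) else 0 := by
  split_ifs with h
  · simp [h]
  · rw [Fin.sum_univ_eq_sum_range (z ^ ·), geom_sum_eq h, hz, sub_self, zero_div]

theorem sum_inv_pow_mul_pow_of_isPrimitiveRoot {n : ℕ} {ζ : K} (hζ : IsPrimitiveRoot ζ n)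
    (a b : Fin n) :
    ∑ t : Fin n, (ζ ^ (t * a : ℕ))⁻¹ * ζ ^ (t * b : ℕ) = if a = b then (n : K) else 0 := by
  classical
  have hζa : ζ ^ (a : ℕ) ≠ 0 := pow_ne_zero _ (hζ.ne_zero a.pos.ne')
  have ratio_pow : ((ζ ^ (a : ℕ))⁻¹ * ζ ^ (b : ℕ)) ^ n = 1 := by
    rw [mul_pow, inv_pow, pow_right_comm, hζ.pow_eq_one, pow_right_comm, hζ.pow_eq_one]
    simp
  have ratio_eq_one_iff : (ζ ^ (a : ℕ))⁻¹ * ζ ^ (b : ℕ) = 1 ↔ a = b := by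
    rw [inv_mul_eq_one₀ hζa, Fin.ext_iff]
    exact ⟨hζ.pow_inj a.isLt b.isLt, congrArg (ζ ^ ·)⟩
  calc ∑ t : Fin n, (ζ ^ (t * a : ℕ))⁻¹ * ζ ^ (t * b : ℕ)
    _ = ∑ t : Fin n, ((ζ ^ (a : ℕ))⁻¹ * ζ ^ (b : ℕ)) ^ (t : ℕ) := by
      simp only [mul_pow, inv_pow, ← pow_mul, mul_comm]
    _ = if a = b then (n : K) else 0 := by
      simp only [sum_pow_eq_ite_of_pow_eq_one ratio_pow, ratio_eq_one_iff]

end RootsOfUnity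

section DFT

/-- The root of unity `ω_n = exp (-2πi / n)` whose powers are, up to the factor `1 / √n`, the
entries of `dftMatrix n`. The sign is that of the forward transform. -/
noncomputable def dftRoot (n : ℕ) : ℂ :=
  Complex.exp (-Complex.I * ((2 * Real.pi / n : ℝ) : ℂ))

theorem dftRoot_isPrimitiveRoot {n : ℕ} (hn : n ≠ 0) : IsPrimitiveRoot (dftRoot n) n := by
  have dftRoot_eq_inv : dftRoot n = (Complex.exp (2 * Real.pi * Complex.I / n))⁻¹ := by
    rw [dftRoot, ← Complex.exp_neg]
    congr 1
    push_cast
    ring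
  rw [dftRoot_eq_inv]
  exact (Complex.isPrimitiveRoot_exp n hn).inv

theorem norm_dftRoot (n : ℕ) : ‖dftRoot n‖ = 1 := by
  rw [dftRoot, neg_mul, mul_comm, ← neg_mul, ← Complex.ofReal_neg, Complex.norm_exp_ofReal_mul_I]

theorem dftRoot_mul_pow (s : ℕ) {Q : ℕ} (hQ : Q ≠ 0) : dftRoot (s * Q) ^ Q = dftRoot s := by
  rw [dftRoot, dftRoot, ← Complex.exp_nat_mul]
  congr 1
  push_cast
  field_simp

theorem ofReal_sqrt_natCast_mul_self (n : ℕ) : (√n : ℂ) * √n = n := by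
  exact_mod_cast Real.mul_self_sqrt n.cast_nonneg

theorem dftMatrix_apply {n : ℕ} (t k : Fin n) :
    dftMatrix n t k = (√n : ℂ)⁻¹ * dftRoot n ^ (t * k : ℕ) := by
  rw [dftMatrix, of_apply, one_div, dftRoot, ← Complex.exp_nat_mul]
  congr 2
  push_cast
  ring

theorem dftMatrix_mem_unitaryGroup (n : ℕ) : dftMatrix n ∈ unitaryGroup (Fin n) ℂ := by
  rw [mem_unitaryGroup_iff', star_eq_conjTranspose]
  ext a b
  have hn : n ≠ 0 := a.pos.ne'
  have star_entry (t : Fin n) :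
      star (dftMatrix n t a) = (√n : ℂ)⁻¹ * (dftRoot n ^ (t * a : ℕ))⁻¹ := by
    rw [dftMatrix_apply, ← inv_pow, Complex.inv_eq_conj (norm_dftRoot n)]
    simp
  calc ((dftMatrix n)ᴴ * dftMatrix n) a b
    _ = (√n * √n : ℂ)⁻¹ *
        ∑ t : Fin n, (dftRoot n ^ (t * a : ℕ))⁻¹ * dftRoot n ^ (t * b : ℕ) := by
      simp only [Matrix.mul_apply, conjTranspose_apply, star_entry, mul_inv, Finset.mul_sum]
      exact Finset.sum_congr rfl fun t _ => by rw [dftMatrix_apply]; ring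
    _ = (1 : Matrix (Fin n) (Fin n) ℂ) a b := by
      rw [sum_inv_pow_mul_pow_of_isPrimitiveRoot (dftRoot_isPrimitiveRoot hn),
        ofReal_sqrt_natCast_mul_self, Matrix.one_apply, mul_ite, mul_zero,
        inv_mul_cancel₀ (Nat.cast_ne_zero.mpr hn)]

/-- The diagonal matrix of the first `s` twiddle factors `ω_N ^ (t * j)`, the phases relating the
`N`-point DFT sampled with offset `t` to an `s`-point DFT. -/
noncomputable def twiddleMatrix (N t s : ℕ) : Matrix (Fin s) (Fin s) ℂ :=
  diagonal fun j => dftRoot N ^ (t * j : ℕ)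

theorem twiddleMatrix_mem_unitaryGroup (N t s : ℕ) :
    twiddleMatrix N t s ∈ unitaryGroup (Fin s) ℂ :=
  diagonal_mem_unitaryGroup fun j => by rw [norm_pow, norm_dftRoot, one_pow]

theorem dftMatrix_submatrix_posIdx {s Q : ℕ} (td : Fin Q) (h : s ≤ s * Q) :
    (dftMatrix (s * Q)).submatrix (posIdx s Q td) (Fin.castLE h) =
      (√Q : ℂ)⁻¹ • (dftMatrix s * twiddleMatrix (s * Q) td s) := by
  ext k j
  have sqrt_mul : (√(s * Q : ℕ) : ℂ) = √s * √Q := by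
    rw [Nat.cast_mul, Real.sqrt_mul s.cast_nonneg, Complex.ofReal_mul]
  have root_pow : dftRoot (s * Q) ^ ((td + Q * k) * j : ℕ) =
      dftRoot s ^ (k * j : ℕ) * dftRoot (s * Q) ^ (td * j : ℕ) := by
    rw [← dftRoot_mul_pow s td.pos.ne', ← pow_mul, ← pow_add]
    ring
  rw [submatrix_apply, Matrix.smul_apply, twiddleMatrix, mul_diagonal, dftMatrix_apply,
    dftMatrix_apply, posIdx, finProdFinEquiv_apply_val, Fin.val_castLE, root_pow, sqrt_mul,
    mul_inv, smul_eq_mul]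
  ring

end DFT

theorem stmt_13_general (s Q : ℕ) (hs : 0 < s) (td : Fin Q)
    (Us : Matrix (Fin (s * Q)) (Fin s) ℂ)
    (hUs : Us = (dftMatrix (s * Q)).submatrix id
      (Fin.castLE (Nat.le_mul_of_pos_right s td.pos)))
    (c : Fin s → ℂ)
    (D : Matrix (Fin (s * Q)) (Fin (s * Q)) ℂ)
    (hD : D = ∑ k : Fin s, c k • Matrix.single (posIdx s Q td k) (posIdx s Q td k) 1) :
    ∃ V : Matrix.unitaryGroup (Fin s) ℂ,
      Usᴴ * D * Us =
          (V : Matrix (Fin s) (Fin s) ℂ) * (((s : ℂ) / ((s * Q : ℕ) : ℂ)) • Matrix.diagonal c) *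
            (V : Matrix (Fin s) (Fin s) ℂ)ᴴ ∧
        (Usᴴ * D * Us).charpoly =
          (((s : ℂ) / ((s * Q : ℕ) : ℂ)) • Matrix.diagonal c).charpoly := by
  let W : unitaryGroup (Fin s) ℂ :=
    ⟨dftMatrix s, dftMatrix_mem_unitaryGroup s⟩ *
      ⟨twiddleMatrix (s * Q) td s, twiddleMatrix_mem_unitaryGroup _ _ _⟩
  have rows_eq :
      Us.submatrix (posIdx s Q td) id = (√Q : ℂ)⁻¹ • (W : Matrix (Fin s) (Fin s) ℂ) := by
    rw [hUs, submatrix_submatrix]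
    exact dftMatrix_submatrix_posIdx td (Nat.le_mul_of_pos_right s td.pos)
  have scale_eq : (√Q : ℂ)⁻¹ * (√Q : ℂ)⁻¹ = (s : ℂ) / ((s * Q : ℕ) : ℂ) := by
    rw [← mul_inv, ofReal_sqrt_natCast_mul_self, Nat.cast_mul,
      div_mul_cancel_left₀ (Nat.cast_ne_zero.mpr hs.ne')]
  have conj_eq : Usᴴ * D * Us = (star W : Matrix (Fin s) (Fin s) ℂ) *
      (((s : ℂ) / ((s * Q : ℕ) : ℂ)) • diagonal c) * (star W : Matrix (Fin s) (Fin s) ℂ)ᴴ := by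
    rw [hD, mul_sum_smul_single_mul, ← conjTranspose_submatrix, rows_eq, ← scale_eq]
    simp [smul_smul, star_eq_conjTranspose]
  exact ⟨star W, conj_eq, conj_eq ▸ charpoly_unitary_conj (star W) _⟩

/-- With `U_s` the first `s` columns of the `N×N` DFT matrix (`N = s·Q`), and `D` the diagonal
matrix with entries `c_k` at positions `Q(k−1)+t_d+1` and zero elsewhere, `Us† D Us` is
unitarily similar to `(s/N)·diag(c_1,…,c_s)`; in particular they have the same characteristic
polynomial (hence the same multiset of eigenvalues). -/
theorem stmt_13 (s Q : ℕ) (hs : 0 < s) (hQ : 0 < Q) (td : Fin Q)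
    (Us : Matrix (Fin (s * Q)) (Fin s) ℂ)
    (hUs : ∀ (i : Fin (s * Q)) (j : Fin s),
      Us i j = dftMatrix (s * Q) i ⟨j.1, lt_of_lt_of_le j.2 (Nat.le_mul_of_pos_right s hQ)⟩)
    (c : Fin s → ℝ)
    (D : Matrix (Fin (s * Q)) (Fin (s * Q)) ℂ)
    (hD : D = ∑ k : Fin s,
      (c k : ℂ) • Matrix.single (posIdx s Q td k) (posIdx s Q td k) 1) :
    ∃ V : Matrix.unitaryGroup (Fin s) ℂ,
      Usᴴ * D * Us =
          (V : Matrix (Fin s) (Fin s) ℂ) *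
            (((s : ℂ) / ((s * Q : ℕ) : ℂ)) • Matrix.diagonal fun k => (c k : ℂ)) *
            (V : Matrix (Fin s) (Fin s) ℂ)ᴴ ∧
        (Usᴴ * D * Us).charpoly =
          (((s : ℂ) / ((s * Q : ℕ) : ℂ)) • Matrix.diagonal fun k => (c k : ℂ)).charpoly :=
  stmt_13_general s Q hs td Us (Matrix.ext hUs) (fun k => c k) D hD
end

section
/- Under the energy-harvesting block-transmission model, define for each k = 1,…,n_T the matrix W_k = Σ_{t=1}^{Q} u_{(k−1)Q+t} u_{(k−1)Q+t}† and the random matrix Z_k = (p_k − E[p_k])·W_k. Then the spectral norm of the sum of second-moment matrices satisfies ‖Σ_{k=1}^{n_T} E[Z_k²]‖ ≤ (ϱ_E/(Q·η_L²))·(s/P_x)²·min{Q·η_U, 1}. -/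
open Matrix Finset MeasureTheory ProbabilityTheory

/-- `u_i`, the conjugate transpose of the `i`-th row of `Us`. -/
noncomputable def rowVec {N s : ℕ} (Us : Matrix (Fin N) (Fin s) ℂ) (i : Fin N) :
    Fin s → ℂ := fun a => star (Us i a)

/-- The spectral norm (the `ℓ²` operator norm) of a square complex matrix. -/
noncomputable def specNorm {n : ℕ} (M : Matrix (Fin n) (Fin n) ℂ) : ℝ :=
  ‖(Matrix.toEuclideanCLM (𝕜 := ℂ) M : EuclideanSpace ℂ (Fin n) →L[ℂ] EuclideanSpace ℂ (Fin n))‖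

/-!
Each `W_k` is positive semidefinite and `∑ k, W_k = Usᴴ * Us ≤ 1`. In the Loewner order
`W_k² ≤ ‖W_k‖ W_k`, so a bound `Var p_k ≤ c` for all `k` gives
`∑ k, E[Z_k²] = ∑ k, Var(p_k) W_k² ≤ c (max_k ‖W_k‖) ∑ k, W_k ≤ c (max_k ‖W_k‖)`.
Finally `‖W_k‖ ≤ 1` because `W_k ≤ ∑ j, W_j`, and `‖W_k‖ ≤ Q η_U` because `W_k` is a sum of `Q`
rank-one projections scaled by the `‖u_i‖²`.
-/

section CStarAlgebra

theorem mul_self_le_norm_smul {A : Type*} [NonUnitalCStarAlgebra A] [PartialOrder A]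
    [StarOrderedRing A] {a : A} (ha : 0 ≤ a) : a * a ≤ ‖a‖ • a := by
  set r := CFC.sqrt a
  have hr : star r = r := (CFC.sqrt_nonneg a).isSelfAdjoint
  have hrr : r * r = a := CFC.sqrt_mul_sqrt_self a
  calc a * a = star r * a * r := by rw [hr, ← hrr]; simp only [mul_assoc]
    _ ≤ ‖a‖ • (star r * r) := CStarAlgebra.star_left_conjugate_le_norm_smul
    _ = ‖a‖ • a := by rw [hr, hrr]

theorem norm_sum_smul_mul_self_le {A ι : Type*} [CStarAlgebra A] [PartialOrder A]
    [StarOrderedRing A] [Fintype ι] [Nonempty ι] {a : ι → A} {v : ι → ℝ} {c m : ℝ}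
    (ha : ∀ k, 0 ≤ a k) (hsum : ∑ k, a k ≤ 1) (hm : ∀ k, ‖a k‖ ≤ m)
    (hv : ∀ k, 0 ≤ v k) (hvc : ∀ k, v k ≤ c) :
    ‖∑ k, v k • (a k * a k)‖ ≤ c * m := by
  have hm₀ : 0 ≤ m := (norm_nonneg _).trans (hm (Classical.arbitrary ι))
  have hc₀ : 0 ≤ c := (hv _).trans (hvc (Classical.arbitrary ι))
  have hsq (k : ι) : 0 ≤ a k * a k := (Commute.refl (a k)).mul_nonneg (ha k) (ha k)
  have hterm (k : ι) : v k • (a k * a k) ≤ (c * m) • a k :=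
    calc v k • (a k * a k) ≤ c • (a k * a k) := smul_le_smul_of_nonneg_right (hvc k) (hsq k)
      _ ≤ c • ‖a k‖ • a k := smul_le_smul_of_nonneg_left (mul_self_le_norm_smul (ha k)) hc₀
      _ ≤ c • m • a k :=
        smul_le_smul_of_nonneg_left (smul_le_smul_of_nonneg_right (hm k) (ha k)) hc₀
      _ = (c * m) • a k := smul_smul c m (a k)
  rw [CStarAlgebra.norm_le_iff_le_algebraMap _ (mul_nonneg hc₀ hm₀)
    (Finset.sum_nonneg fun k _ => smul_nonneg (hv k) (hsq k)), Algebra.algebraMap_eq_smul_one]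
  calc ∑ k, v k • (a k * a k) ≤ ∑ k, (c * m) • a k := Finset.sum_le_sum fun k _ => hterm k
    _ = (c * m) • ∑ k, a k := Finset.smul_sum.symm
    _ ≤ (c * m) • 1 := smul_le_smul_of_nonneg_left hsum (mul_nonneg hc₀ hm₀)

end CStarAlgebra

section SecondMoment

variable {Ω : Type*} [MeasurableSpace Ω] {μ : Measure Ω}

theorem variance_sum_div_le {ι : Type*} [Fintype ι] [Nonempty ι] {X : ι → Ω → ℝ} {ϱ a c : ℝ}
    (hX : ∀ i, MemLp (X i) 2 μ) (hindep : Pairwise fun i j => IndepFun (X i) (X j) μ)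
    (hvar : ∀ i, Var[X i; μ] ≤ ϱ) (ha : 0 < a) (hac : Fintype.card ι * a ≤ c) :
    Var[fun ω => (∑ i, X i ω) / c; μ] ≤ ϱ / (Fintype.card ι * a ^ 2) := by
  have hϱ : 0 ≤ ϱ := (variance_nonneg _ _).trans (hvar (Classical.arbitrary ι))
  calc Var[fun ω => (∑ i, X i ω) / c; μ] = (∑ i, Var[X i; μ]) / c ^ 2 := by
        rw [← IndepFun.variance_sum (fun i _ => hX i) (hindep.set_pairwise _)]
        simp only [div_eq_mul_inv, variance_mul_const, inv_pow, Finset.sum_fn]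
    _ ≤ Fintype.card ι * ϱ / (Fintype.card ι * a) ^ 2 := by
        gcongr
        simpa using Finset.sum_le_card_nsmul Finset.univ _ ϱ fun i _ => hvar i
    _ = ϱ / (Fintype.card ι * a ^ 2) := by field_simp

theorem of_integral_centered_smul_mul_self {n : Type*} [Fintype n] {X : Ω → ℝ}
    (hX : AEMeasurable X μ) (M : Matrix n n ℂ) :
    (Matrix.of fun i j => ∫ ω, ((((X ω - ∫ ω', X ω' ∂μ : ℝ) : ℂ) • M) *
      (((X ω - ∫ ω', X ω' ∂μ : ℝ) : ℂ) • M)) i j ∂μ) = Var[X; μ] • (M * M) := by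
  ext i j
  simp only [smul_mul_smul_comm, ← sq, Matrix.of_apply, Matrix.smul_apply,
    Complex.coe_smul, integral_smul_const, variance_eq_integral hX]

end SecondMoment

section BlockGram

open scoped ComplexOrder MatrixOrder Matrix.Norms.L2Operator

theorem norm_vecMulVec_star {𝕜 m n : Type*} [RCLike 𝕜] [Fintype m] [Fintype n] [DecidableEq n]
    (v : m → 𝕜) (w : n → 𝕜) :
    ‖vecMulVec v (star w)‖ = ‖WithLp.toLp 2 v‖ * ‖WithLp.toLp 2 w‖ := by
  have hrankOne : vecMulVec v (star w) = toEuclideanLin.symm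
      (InnerProductSpace.rankOne 𝕜 (WithLp.toLp 2 v) (WithLp.toLp 2 w)).toLinearMap :=
    (InnerProductSpace.symm_toEuclideanLin_rankOne _ _).symm
  rw [hrankOne, l2_opNorm_def, LinearEquiv.trans_apply, LinearEquiv.apply_symm_apply,
    ← InnerProductSpace.norm_rankOne (𝕜 := 𝕜)]
  rfl

theorem conjTranspose_mul_self_eq_sum_vecMulVec {R m n : Type*} [NonUnitalNonAssocSemiring R]
    [StarRing R] [Fintype m] (A : Matrix m n R) :
    Aᴴ * A = ∑ i, vecMulVec (star (A i)) (A i) := by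
  ext a b
  simp [mul_apply, Matrix.sum_apply, vecMulVec_apply]

theorem norm_vecMulVec_rowVec {N s : ℕ} (Us : Matrix (Fin N) (Fin s) ℂ) (i : Fin N) :
    ‖vecMulVec (rowVec Us i) (star (rowVec Us i))‖ = rowNormSq Us i := by
  rw [norm_vecMulVec_star, ← sq, EuclideanSpace.norm_sq_eq]
  simp only [rowVec, norm_star, rowNormSq]

theorem star_rowVec {N s : ℕ} (Us : Matrix (Fin N) (Fin s) ℂ) (i : Fin N) :
    star (rowVec Us i) = Us i :=
  star_star (Us i)

variable {nT Q s : ℕ} {Us : Matrix (Fin (nT * Q)) (Fin s) ℂ} {k : Fin nT}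

/-- The Gram matrix `W_k = ∑ t, u_{(k-1)Q+t} u_{(k-1)Q+t}†` of the `k`-th block of `Q` rows of `Us`,
so that `W_k = U_k† U_k` for that block `U_k`. -/
noncomputable def blockGram (Us : Matrix (Fin (nT * Q)) (Fin s) ℂ) (k : Fin nT) :
    Matrix (Fin s) (Fin s) ℂ :=
  ∑ t : Fin Q, vecMulVec (rowVec Us (blockIdx nT Q k t)) (star (rowVec Us (blockIdx nT Q k t)))

theorem blockGram_nonneg : 0 ≤ blockGram Us k :=
  Finset.sum_nonneg fun _ _ => (posSemidef_vecMulVec_self_star _).nonneg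

theorem sum_blockGram : ∑ k, blockGram Us k = Usᴴ * Us := by
  rw [conjTranspose_mul_self_eq_sum_vecMulVec, ← finProdFinEquiv.sum_comp, Fintype.sum_prod_type]
  simp only [blockGram, star_rowVec]
  rfl

theorem norm_blockGram_le_one (hUs : Usᴴ * Us ≤ 1) : ‖blockGram Us k‖ ≤ 1 := by
  rw [CStarAlgebra.norm_le_one_iff_of_nonneg _ blockGram_nonneg]
  calc blockGram Us k ≤ ∑ j, blockGram Us j :=
        Finset.single_le_sum (fun _ _ => blockGram_nonneg) (Finset.mem_univ k)
    _ ≤ 1 := sum_blockGram.trans_le hUs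

theorem norm_blockGram_le_mul {η : ℝ} (hη : ∀ i, rowNormSq Us i ≤ η) :
    ‖blockGram Us k‖ ≤ Q * η := by
  calc ‖blockGram Us k‖ ≤ ∑ t : Fin Q, rowNormSq Us (blockIdx nT Q k t) :=
        norm_sum_le_of_le _ fun t _ => (norm_vecMulVec_rowVec Us _).le
    _ ≤ ∑ _t : Fin Q, η := Finset.sum_le_sum fun t _ => hη _
    _ = Q * η := by simp

theorem blockIdx_injective : Function.Injective (blockIdx nT Q k) := fun t t' h => by
  simpa [blockIdx] using h

theorem variance_block_div_le {Ω : Type*} [MeasurableSpace Ω] {μ : Measure Ω} [NeZero Q]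
    {Px ηL ϱE : ℝ} (hs : 0 < s) (hPx : 0 < Px) (hηLpos : 0 < ηL)
    (hηL : ∀ i, ηL ≤ rowNormSq Us i) {E : Fin (nT * Q) → Ω → ℝ} (hE : ∀ i, MemLp (E i) 2 μ)
    (hindep : Pairwise fun i j => IndepFun (E i) (E j) μ) (hvar : ∀ i, Var[E i; μ] ≤ ϱE)
    (k : Fin nT) :
    Var[fun ω => (∑ t : Fin Q, E (blockIdx nT Q k t) ω) /
      ∑ t : Fin Q, Px / s * rowNormSq Us (blockIdx nT Q k t); μ] ≤
      ϱE / (Q * ηL ^ 2) * (s / Px) ^ 2 := by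
  have hpower : Fintype.card (Fin Q) * (Px / s * ηL) ≤
      ∑ t : Fin Q, Px / s * rowNormSq Us (blockIdx nT Q k t) :=
    calc Fintype.card (Fin Q) * (Px / s * ηL) = ∑ _t : Fin Q, Px / s * ηL := by simp
      _ ≤ _ := Finset.sum_le_sum fun t _ => by gcongr; exact hηL _
  calc _ ≤ ϱE / (Fintype.card (Fin Q) * (Px / s * ηL) ^ 2) :=
        variance_sum_div_le (fun t => hE _) (hindep.comp_of_injective blockIdx_injective)
          (fun t => hvar _) (by positivity) hpower
    _ = ϱE / (Q * ηL ^ 2) * (s / Px) ^ 2 := by rw [Fintype.card_fin]; field_simp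

theorem stmt_16_general
    {Ω : Type*} [MeasurableSpace Ω] {μ : Measure Ω}
    (hs : 0 < s) (hnT : 0 < nT) (hQ : 0 < Q) (hUs : Usᴴ * Us ≤ 1)
    {ηL ηU : ℝ} (hηL : ηL = ⨅ i, rowNormSq Us i) (hηU : ηU = ⨆ i, rowNormSq Us i)
    (hηLpos : 0 < ηL) {Px : ℝ} (hPx : 0 < Px) {ϱE : ℝ} {E : Fin (nT * Q) → Ω → ℝ}
    (hE : ∀ i, MemLp (E i) 2 μ) (hindep : Pairwise fun i j => IndepFun (E i) (E j) μ)
    (hvar : ∀ i, Var[E i; μ] ≤ ϱE) {S : Fin nT → ℝ}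
    (hS : ∀ k, S k = ∑ t : Fin Q, Px / s * rowNormSq Us (blockIdx nT Q k t))
    {p : Fin nT → Ω → ℝ} (hp : ∀ k ω, p k ω = (∑ t : Fin Q, E (blockIdx nT Q k t) ω) / S k)
    {W : Fin nT → Matrix (Fin s) (Fin s) ℂ} (hW : ∀ k, W k = blockGram Us k)
    {Z : Fin nT → Ω → Matrix (Fin s) (Fin s) ℂ}
    (hZ : ∀ k ω, Z k ω = ((p k ω - ∫ ω', p k ω' ∂μ : ℝ) : ℂ) • W k)
    {EZ2 : Fin nT → Matrix (Fin s) (Fin s) ℂ}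
    (hEZ2 : ∀ k, EZ2 k = Matrix.of fun i j => ∫ ω, (Z k ω * Z k ω) i j ∂μ) :
    specNorm (∑ k, EZ2 k) ≤ ϱE / (Q * ηL ^ 2) * (s / Px) ^ 2 * min (Q * ηU) 1 := by
  have : NeZero nT := ⟨hnT.ne'⟩
  have : NeZero Q := ⟨hQ.ne'⟩
  have hrowL (i) : ηL ≤ rowNormSq Us i := hηL ▸ ciInf_le (Set.finite_range _).bddBelow i
  have hrowU (i) : rowNormSq Us i ≤ ηU := hηU ▸ le_ciSup (Set.finite_range _).bddAbove i
  have hp_eq (k) : p k = fun ω => (∑ t : Fin Q, E (blockIdx nT Q k t) ω) / S k := funext (hp k)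
  have hEZ2_eq (k) : EZ2 k = Var[p k; μ] • (blockGram Us k * blockGram Us k) := by
    have hpm : AEMeasurable (p k) μ := hp_eq k ▸
      (Finset.aemeasurable_fun_sum _ fun t _ => (hE _).aemeasurable).div_const _
    rw [hEZ2, ← of_integral_centered_smul_mul_self hpm]
    simp only [hZ, hW]
  have hvar_p (k) : Var[p k; μ] ≤ ϱE / (Q * ηL ^ 2) * (s / Px) ^ 2 := by
    rw [hp_eq, hS]
    exact variance_block_div_le hs hPx hηLpos hrowL hE hindep hvar k
  simp only [hEZ2_eq]
  exact norm_sum_smul_mul_self_le (fun _ => blockGram_nonneg) (sum_blockGram.trans_le hUs)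
    (fun _ => le_min (norm_blockGram_le_mul hrowU) (norm_blockGram_le_one hUs))
    (fun _ => variance_nonneg _ _) hvar_p

end BlockGram

/-- Variance bound for the matrices `Z_k = (p_k − E[p_k])·W_k`,
`W_k = Σ_{t=1}^{Q} u_{(k−1)Q+t} u_{(k−1)Q+t}†`, in the energy-harvesting block-transmission
model: `‖Σ_k E[Z_k²]‖ ≤ (ϱ_E/(Q·η_L²))·(s/P_x)²·min{Q·η_U, 1}`. -/
theorem stmt_16
    {Ω : Type} [MeasureSpace Ω] [IsProbabilityMeasure (ℙ : Measure Ω)]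
    (s nT Q : ℕ) (hs : 0 < s) (hnT : 0 < nT) (hQ : 0 < Q) (hsN : s ≤ nT * Q)
    (Us : Matrix (Fin (nT * Q)) (Fin s) ℂ) (hUs : Usᴴ * Us = 1)
    (ηL ηU : ℝ) (hηL : ηL = ⨅ i, rowNormSq Us i) (hηU : ηU = ⨆ i, rowNormSq Us i)
    (hηLpos : 0 < ηL)
    (Px : ℝ) (hPx : 0 < Px)
    (μE ϱE rE : ℝ) (hμE : 0 < μE) (hϱE : 0 < ϱE) (hrE : 1 ≤ rE)
    (E : Fin (nT * Q) → Ω → ℝ) (hEmeas : ∀ i, Measurable (E i))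
    (hindep : iIndepFun E ℙ)
    (hident : ∀ i j, IdentDistrib (E i) (E j) ℙ ℙ)
    (hmean : ∀ i, ∫ ω, E i ω = μE)
    (hvar : ∀ i, variance (E i) ℙ = ϱE)
    (hbdd : ∀ i, ∀ᵐ ω, 0 ≤ E i ω ∧ E i ω ≤ rE * μE)
    (S : Fin nT → ℝ)
    (hS : ∀ k, S k = ∑ t : Fin Q, Px / s * rowNormSq Us (blockIdx nT Q k t))
    (p : Fin nT → Ω → ℝ)
    (hp : ∀ k ω, p k ω = (∑ t : Fin Q, E (blockIdx nT Q k t) ω) / S k)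
    (W : Fin nT → Matrix (Fin s) (Fin s) ℂ)
    (hW : ∀ k, W k = ∑ t : Fin Q,
      Matrix.vecMulVec (rowVec Us (blockIdx nT Q k t)) (star (rowVec Us (blockIdx nT Q k t))))
    (Z : Fin nT → Ω → Matrix (Fin s) (Fin s) ℂ)
    (hZ : ∀ k ω, Z k ω = (((p k ω - ∫ ω', p k ω' : ℝ) : ℂ)) • W k)
    (EZ2 : Fin nT → Matrix (Fin s) (Fin s) ℂ)
    (hEZ2 : ∀ k, EZ2 k = Matrix.of fun i j => ∫ ω, (Z k ω * Z k ω) i j) :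
    specNorm (∑ k, EZ2 k) ≤ ϱE / (Q * ηL ^ 2) * (s / Px) ^ 2 * min (Q * ηU) 1 := by
  open scoped MatrixOrder in
  exact stmt_16_general hs hnT hQ hUs.le hηL hηU hηLpos hPx
    (fun i => memLp_of_bounded (hbdd i) (hEmeas i).aestronglyMeasurable 2)
    (fun _ _ hij => hindep.indepFun hij) (fun i => (hvar i).le) hS hp hW hZ hEZ2
end
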